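/- Let A = [a_1, ..., a_n] ∈ ℝ^{m×n} be nonzero and let (B, N) be the canonical partition of {1,...,n} (B ∪ N = {1,...,n}, B ∩ N = ∅, A_B x_B = 0 with x_B > 0 is feasible, and A_N^T y > 0, A_B^T y = 0 is feasible). If B ≠ ∅ and L := span(A_B) = {0} (i.e., all columns indexed by B are zero), then φ(A) ≥ ρ_N(A), where ρ_N(A) := max_{z ∈ ℝ^m, ‖z‖₂=1} min_{i ∈ N} ⟨a_i, z⟩. -/

import Mathlib

open scoped RealInnerProductSpace BigOperators

/-- `comb a x = A x`, the combination `∑ i, x i • a i` of the columns `a i` of `A`. -/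
noncomputable def comb {m n : ℕ} (a : Fin n → EuclideanSpace ℝ (Fin m)) (x : Fin n → ℝ) :
    EuclideanSpace ℝ (Fin m) := ∑ i, x i • a i

/-- `φ(A, x) = sup {λ > 0 : ∃ u v ∈ Δ_{n-1}, S(u) ⊆ S(x), Au - Av = (λ/‖Ax‖) Ax}`. -/
noncomputable def phiAt {m n : ℕ} (a : Fin n → EuclideanSpace ℝ (Fin m))
    (x : Fin n → ℝ) : ℝ :=
  sSup {lam : ℝ | 0 < lam ∧ ∃ u ∈ stdSimplex ℝ (Fin n), ∃ v ∈ stdSimplex ℝ (Fin n),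
    (∀ i, 0 < u i → 0 < x i) ∧
    comb a u - comb a v = (lam / ‖comb a x‖) • comb a x}

/-- The restricted width `φ(A) = min {φ(A, x) : x ≥ 0, Ax ≠ 0}`. -/
noncomputable def phi {m n : ℕ} (a : Fin n → EuclideanSpace ℝ (Fin m)) : ℝ :=
  sInf {t : ℝ | ∃ x : Fin n → ℝ, (∀ i, 0 ≤ x i) ∧ comb a x ≠ 0 ∧ t = phiAt a x}

theorem comb_norm_le {m n : ℕ} (a : Fin n → EuclideanSpace ℝ (Fin m)) (u : Fin n → ℝ)
    (hu : u ∈ stdSimplex ℝ (Fin n)) : ‖comb a u‖ ≤ ∑ i, ‖a i‖ := by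
  unfold comb
  refine (norm_sum_le _ _).trans (Finset.sum_le_sum fun i _ => ?_)
  rw [norm_smul, Real.norm_eq_abs, abs_of_nonneg (hu.1 i)]
  have h1 : u i ≤ 1 := by
    rw [← hu.2]
    exact Finset.single_le_sum (fun j _ => hu.1 j) (Finset.mem_univ i)
  exact mul_le_of_le_one_left (norm_nonneg _) h1

theorem phiAt_bdd {m n : ℕ} (a : Fin n → EuclideanSpace ℝ (Fin m)) (x : Fin n → ℝ)
    (hx : comb a x ≠ 0) :
    BddAbove {lam : ℝ | 0 < lam ∧ ∃ u ∈ stdSimplex ℝ (Fin n), ∃ v ∈ stdSimplex ℝ (Fin n),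
    (∀ i, 0 < u i → 0 < x i) ∧
    comb a u - comb a v = (lam / ‖comb a x‖) • comb a x} := by
  refine ⟨∑ i, ‖a i‖ + ∑ i, ‖a i‖, ?_⟩
  rintro lam ⟨h0, u, hu, v, hv, -, h⟩
  have hp : 0 < ‖comb a x‖ := norm_pos_iff.2 hx
  have h2 : ‖comb a u - comb a v‖ = lam := by
    rw [h, norm_smul, Real.norm_eq_abs, abs_of_pos (div_pos h0 hp)]
    field_simp
  rw [← h2]
  exact (norm_sub_le _ _).trans (add_le_add (comb_norm_le a u hu) (comb_norm_le a v hv))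

/-- for the canonical partition `(B, N)` of a nonzero matrix `A`, if
`B ≠ ∅` and `L := span(A_B) = {0}` (all columns indexed by `B` are zero), then
`φ(A) ≥ ρ_N(A)`, where `ρ_N(A) = max_{‖z‖=1} min_{i ∈ N} ⟪a i, z⟫`. -/
theorem stmt17 (m n : ℕ) (hn : 0 < n) (a : Fin n → EuclideanSpace ℝ (Fin m))
    (hA : ∃ i, a i ≠ 0) (B N : Finset (Fin n))
    (hBN : B ∪ N = Finset.univ) (hdisj : B ∩ N = ∅)
    (hB : ∃ xB : Fin n → ℝ, (∀ i ∈ B, 0 < xB i) ∧ ∑ i ∈ B, xB i • a i = 0)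
    (hN : ∃ y : EuclideanSpace ℝ (Fin m),
      (∀ i ∈ N, 0 < ⟪a i, y⟫) ∧ ∀ i ∈ B, ⟪a i, y⟫ = 0)
    (hBne : B.Nonempty)
    (hL : Submodule.span ℝ (a '' (B : Set (Fin n))) = ⊥) (ρN : ℝ)
    (hρN : IsGreatest
      {t : ℝ | ∃ z : EuclideanSpace ℝ (Fin m), ‖z‖ = 1 ∧
        t = sInf {s : ℝ | ∃ i ∈ N, s = ⟪a i, z⟫}} ρN) :
    ρN ≤ phi a := by
  have hB0 : ∀ i ∈ B, a i = 0 := by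
    intro i hi
    have : a i ∈ Submodule.span ℝ (a '' (B : Set (Fin n))) :=
      Submodule.subset_span ⟨i, hi, rfl⟩
    rw [hL] at this
    simpa using this
  have hBor : ∀ i, i ∉ N → a i = 0 := by
    intro i hi
    have h : i ∈ B ∪ N := by rw [hBN]; exact Finset.mem_univ i
    rcases Finset.mem_union.1 h with h | h
    · exact hB0 i h
    · exact absurd h hi
  obtain ⟨b, hb⟩ := hBne
  obtain ⟨⟨z, hz, hρ⟩, -⟩ := hρN
  have hle : ∀ i ∈ N, ρN ≤ ⟪a i, z⟫ := by
    intro i hi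
    rw [hρ]
    refine csInf_le ?_ ⟨i, hi, rfl⟩
    have : {s : ℝ | ∃ i ∈ N, s = ⟪a i, z⟫} = (fun i => ⟪a i, z⟫) '' (N : Set (Fin n)) := by
      ext s; simp [eq_comm]
    rw [this]
    exact (N.finite_toSet.image _).bddBelow
  unfold phi
  refine le_csInf ?_ ?_
  · obtain ⟨i, hi⟩ := hA
    refine ⟨_, Pi.single i 1, ?_, ?_, rfl⟩
    · intro j
      by_cases h : j = i
      · subst h; simp
      · simp [h]
    · simpa [comb, Pi.single_apply] using hi
  rintro t ⟨x, hx0, hx, rfl⟩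
  have hcN : comb a x = ∑ i ∈ N, x i • a i := by
    unfold comb
    symm
    refine Finset.sum_subset (Finset.subset_univ _) fun i _ hi => ?_
    rw [hBor i hi, smul_zero]
  have hS0 : 0 ≤ ∑ i ∈ N, x i := Finset.sum_nonneg fun i _ => hx0 i
  have hS : 0 < ∑ i ∈ N, x i := by
    refine lt_of_le_of_ne hS0 fun h => hx ?_
    have h' := (Finset.sum_eq_zero_iff_of_nonneg (fun i _ => hx0 i)).1 h.symm
    rw [hcN]
    exact Finset.sum_eq_zero fun i hi => by rw [h' i hi, zero_smul]
  set S := ∑ i ∈ N, x i with hSdef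
  have hp : 0 < ‖comb a x‖ := norm_pos_iff.2 hx
  have h1 : ρN * S ≤ ‖comb a x‖ := by
    calc ρN * S ≤ ⟪comb a x, z⟫ := by
          rw [hcN, sum_inner, hSdef, Finset.mul_sum]
          refine Finset.sum_le_sum fun i hi => ?_
          rw [real_inner_smul_left, mul_comm]
          exact mul_le_mul_of_nonneg_left (hle i hi) (hx0 i)
      _ ≤ ‖comb a x‖ * ‖z‖ := real_inner_le_norm _ _
      _ = ‖comb a x‖ := by rw [hz, mul_one]
  refine ((le_div_iff₀ hS).2 h1).trans (le_csSup (phiAt_bdd a x hx) ?_)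
  refine ⟨div_pos hp hS, fun i => if i ∈ N then x i / S else 0, ⟨?_, ?_⟩, Pi.single b 1,
    single_mem_stdSimplex ℝ b, ?_, ?_⟩
  · intro i
    dsimp only
    split_ifs
    · exact div_nonneg (hx0 i) hS0
    · exact le_rfl
  · rw [Finset.sum_ite_mem, Finset.univ_inter, ← Finset.sum_div, ← hSdef, div_self hS.ne']
  · intro i hi
    dsimp only at hi
    split_ifs at hi with h
    · exact (div_pos_iff_of_pos_right hS).1 hi
    · exact absurd hi (lt_irrefl _)
  · have hv : comb a (Pi.single b 1) = 0 := by
      simp [comb, Pi.single_apply, hB0 b hb]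
    have hc : ‖comb a x‖ / S / ‖comb a x‖ = S⁻¹ := by field_simp
    rw [hv, sub_zero, hc, hcN, Finset.smul_sum]
    simp only [comb, ite_smul, zero_smul]
    rw [Finset.sum_ite_mem, Finset.univ_inter]
    refine Finset.sum_congr rfl fun i _ => ?_
    rw [smul_smul, div_eq_inv_mul]
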